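/- For every n ≥ 3, the n×n {0,1}-matrix A (indices taken in {1,…,n}) defined by: A_{ij} = 1 if i ≡ j+1 (mod n), or if i = n and j ≠ n, or if (i,j) = (1,2); and A_{ij} = 0 otherwise, is two-fold irreducible (both A and AᵀA are irreducible) but is partly decomposable (not fully indecomposable). Hence full indecomposability is not necessary for two-fold irreducibility. -/

import Mathlib

open Matrix

/-- A nonnegative matrix is irreducible if for every pair (i,j) some power has a
positive (i,j) entry. -/
def MatIrred {n : ℕ} (A : Matrix (Fin n) (Fin n) ℝ) : Prop :=
  ∀ i j : Fin n, ∃ m : ℕ, 0 < m ∧ 0 < (A ^ m) i j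

/-- A nonnegative matrix is primitive if some power has all entries positive. -/
def MatPrimitive {n : ℕ} (A : Matrix (Fin n) (Fin n) ℝ) : Prop :=
  ∃ m : ℕ, 0 < m ∧ ∀ i j : Fin n, 0 < (A ^ m) i j

/-- A square matrix is fully indecomposable if there are no nonempty index sets
S, T with |S| + |T| = n and A_{ij} = 0 for all i ∈ S, j ∈ T. -/
def FullyIndec {n : ℕ} (A : Matrix (Fin n) (Fin n) ℝ) : Prop :=
  ¬ ∃ S T : Finset (Fin n), S.Nonempty ∧ T.Nonempty ∧ S.card + T.card = n ∧
      ∀ i ∈ S, ∀ j ∈ T, A i j = 0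

/-!
Rows and columns are numbered from `0`. The entries at `(j + 1, j)` form a directed cycle through
all indices, which alone makes `A` irreducible. For `Aᵀ * A`, two indices are joined as soon as the
corresponding columns of `A` are both nonzero in some row: column `1` meets every column but the
last one in row `n - 1`, and it meets the last one in row `0`. Hence any two indices are joined in
two steps through `1`, so `(Aᵀ * A) ^ 2` is entrywise positive. Finally, row `1` of `A` vanishes
outside column `0`, so `{1}` and the complement of `{0}` witness partial decomposability.
-/

section Positivity

variable {ι κ ν R : Type*} [Fintype κ] [Semiring R] [PartialOrder R]

lemma matrix_mul_apply_nonneg [IsOrderedRing R] {A : Matrix ι κ R} {B : Matrix κ ν R}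
    (hA : ∀ i k, 0 ≤ A i k) (hB : ∀ k j, 0 ≤ B k j) (i : ι) (j : ν) : 0 ≤ (A * B) i j :=
  Finset.sum_nonneg fun k _ => mul_nonneg (hA i k) (hB k j)

variable [IsStrictOrderedRing R]

lemma matrix_mul_apply_pos {A : Matrix ι κ R} {B : Matrix κ ν R}
    (hA : ∀ i k, 0 ≤ A i k) (hB : ∀ k j, 0 ≤ B k j) {i : ι} {k : κ} {j : ν}
    (hik : 0 < A i k) (hkj : 0 < B k j) : 0 < (A * B) i j :=
  Finset.sum_pos' (fun k _ => mul_nonneg (hA i k) (hB k j))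
    ⟨k, Finset.mem_univ k, mul_pos hik hkj⟩

lemma matrix_pow_apply_perm_pow_pos [DecidableEq κ] {A : Matrix κ κ R} (hA : ∀ i j, 0 ≤ A i j)
    {σ : Equiv.Perm κ} (hσ : ∀ j, 0 < A (σ j) j) (m : ℕ) (j : κ) :
    0 < (A ^ m) ((σ ^ m) j) j := by
  induction m with
  | zero => simp
  | succ m ih =>
    rw [pow_succ' A, pow_succ' σ, Equiv.Perm.mul_apply]
    exact matrix_mul_apply_pos hA (pow_apply_nonneg hA m) (hσ _) ih

end Positivity

lemma isCycleOn_univ_finRotate (n : ℕ) : (finRotate n).IsCycleOn Set.univ := by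
  rcases lt_or_ge n 2 with hn | hn
  · have : Subsingleton (Fin n) := Fin.subsingleton_iff_le_one.mpr (by lia)
    exact Equiv.Perm.isCycleOn_of_subsingleton _ _
  · have hmoved : {i | finRotate n i ≠ i} = Set.univ := by
      rw [← Equiv.Perm.coe_support_eq_set_support, support_finRotate_of_le hn, Finset.coe_univ]
    exact hmoved ▸ (isCycle_finRotate_of_le hn).isCycleOn

section Irreducibility

variable {n : ℕ} {A : Matrix (Fin n) (Fin n) ℝ}

lemma MatPrimitive.matIrred (h : MatPrimitive A) : MatIrred A := by
  obtain ⟨m, hm, hpos⟩ := h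
  exact fun i j => ⟨m, hm, hpos i j⟩

lemma matIrred_of_isCycleOn (hA : ∀ i j, 0 ≤ A i j) {σ : Equiv.Perm (Fin n)}
    (hσ : σ.IsCycleOn Set.univ) (hpos : ∀ j, 0 < A (σ j) j) : MatIrred A := by
  intro i j
  obtain ⟨m, hm, -, rfl⟩ := (hσ.2 (Set.mem_univ j) (Set.mem_univ i)).exists_pow_eq''
  exact ⟨m, hm, matrix_pow_apply_perm_pow_pos hA hpos m j⟩

lemma matPrimitive_transpose_mul_self (hA : ∀ i j, 0 ≤ A i j) {c : Fin n}
    (hc : ∀ j, ∃ k, 0 < A k j ∧ 0 < A k c) : MatPrimitive (Aᵀ * A) := by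
  have hAT : ∀ i j, 0 ≤ Aᵀ i j := fun i j => hA j i
  have hnonneg : ∀ i j, 0 ≤ (Aᵀ * A) i j := matrix_mul_apply_nonneg hAT hA
  refine ⟨2, two_pos, fun i j => ?_⟩
  obtain ⟨k, hki, hkc⟩ := hc i
  obtain ⟨l, hlj, hlc⟩ := hc j
  have hic : 0 < (Aᵀ * A) i c := matrix_mul_apply_pos hAT hA (k := k) hki hkc
  have hcj : 0 < (Aᵀ * A) c j := matrix_mul_apply_pos hAT hA (k := l) hlc hlj
  rw [sq]
  exact matrix_mul_apply_pos hnonneg hnonneg hic hcj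

lemma not_fullyIndec_of_row_eq_zero (hn : 2 ≤ n) {i j : Fin n}
    (hrow : ∀ k, k ≠ j → A i k = 0) : ¬ FullyIndec A := by
  have hcard : ({j}ᶜ : Finset (Fin n)).card = n - 1 := by
    rw [Finset.card_compl, Finset.card_singleton, Fintype.card_fin]
  refine not_not_intro ⟨{i}, {j}ᶜ, Finset.singleton_nonempty i, ?_, ?_, ?_⟩
  · exact Finset.card_pos.mp (by lia)
  · rw [Finset.card_singleton, hcard]
    lia
  · simpa using hrow

end Irreducibility

/-- The adjacency matrix of the directed cycle with edges from `j + 1` to `j`, to which chords are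
added from the last vertex to all others and from the first vertex to the second. Indices run
over `0, …, n - 1` instead of `1, …, n`. -/
def chordedCycle (n : ℕ) : Matrix (Fin n) (Fin n) ℝ :=
  of fun i j =>
    if i.val = (j.val + 1) % n ∨ (i.val = n - 1 ∧ j.val ≠ n - 1) ∨ (i.val = 0 ∧ j.val = 1)
    then 1 else 0

namespace chordedCycle

variable {n : ℕ}

lemma apply_nonneg (i j : Fin n) : 0 ≤ chordedCycle n i j := by
  rw [chordedCycle, of_apply]
  split_ifs <;> norm_num

lemma apply_pos_iff {i j : Fin n} :
    0 < chordedCycle n i j ↔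
      i.val = (j.val + 1) % n ∨ (i.val = n - 1 ∧ j.val ≠ n - 1) ∨ (i.val = 0 ∧ j.val = 1) := by
  rw [chordedCycle, of_apply]
  split_ifs with h <;> simp [h]

lemma apply_finRotate_pos (j : Fin n) : 0 < chordedCycle n (finRotate n j) j := by
  have := j.neZero
  exact apply_pos_iff.mpr (Or.inl (by simp [Fin.val_add]))

lemma exists_pos_and_pos_one (hn : 3 ≤ n) (j : Fin n) :
    ∃ k, 0 < chordedCycle n k j ∧ 0 < chordedCycle n k ⟨1, by lia⟩ := by
  by_cases hj : j.val = n - 1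
  · have hwrap : (j.val + 1) % n = 0 := by
      rw [hj, Nat.sub_add_cancel (by lia), Nat.mod_self]
    exact ⟨⟨0, by lia⟩, apply_pos_iff.mpr (Or.inl hwrap.symm),
      apply_pos_iff.mpr (Or.inr (Or.inr ⟨rfl, rfl⟩))⟩
  · have hone : 1 ≠ n - 1 := by lia
    exact ⟨⟨n - 1, by lia⟩, apply_pos_iff.mpr (Or.inr (Or.inl ⟨rfl, hj⟩)),
      apply_pos_iff.mpr (Or.inr (Or.inl ⟨rfl, hone⟩))⟩

lemma one_apply_eq_zero (hn : 2 ≤ n) {j : Fin n} (hj : j ≠ ⟨0, by lia⟩) :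
    chordedCycle n ⟨1, by lia⟩ j = 0 := by
  refine (apply_nonneg _ _).eq_of_not_lt' ?_
  have hj_pos : 0 < j.val := Nat.pos_of_ne_zero (Fin.val_ne_of_ne hj)
  have hsucc : (j.val + 1) % n ≠ 1 := by
    rcases (Nat.succ_le_of_lt j.isLt).lt_or_eq with hlt | heq
    · rw [Nat.mod_eq_of_lt hlt]
      lia
    · simp [← heq]
  rw [apply_pos_iff]
  simp only
  lia

theorem matIrred : MatIrred (chordedCycle n) :=
  matIrred_of_isCycleOn apply_nonneg (isCycleOn_univ_finRotate n) apply_finRotate_pos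

theorem matPrimitive_gram (hn : 3 ≤ n) : MatPrimitive ((chordedCycle n)ᵀ * chordedCycle n) :=
  matPrimitive_transpose_mul_self apply_nonneg (exists_pos_and_pos_one hn)

theorem not_fullyIndec (hn : 2 ≤ n) : ¬ FullyIndec (chordedCycle n) :=
  not_fullyIndec_of_row_eq_zero hn fun _ => one_apply_eq_zero hn

end chordedCycle

theorem stmt13 {n : ℕ} (hn : 3 ≤ n) (A : Matrix (Fin n) (Fin n) ℝ)
    (hAdef : ∀ i j : Fin n,
      A i j = if (i.val = (j.val + 1) % n ∨
                  (i.val = n - 1 ∧ j.val ≠ n - 1) ∨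
                  (i.val = 0 ∧ j.val = 1)) then 1 else 0) :
    (MatIrred A ∧ MatIrred (Aᵀ * A)) ∧ ¬ FullyIndec A := by
  obtain rfl : A = chordedCycle n := Matrix.ext hAdef
  exact ⟨⟨chordedCycle.matIrred, (chordedCycle.matPrimitive_gram hn).matIrred⟩,
    chordedCycle.not_fullyIndec (by lia)⟩
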